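/- For every Cauchy sequence (x⁽ⁿ⁾) of rational numbers, the lower limit of the sequence (ι(x⁽ⁿ⁾)) in (𝓡,⪯) is equivalent to its upper limit: sup{ inf{ι(x⁽ᵏ⁾) : k ≥ n} : n ∈ ℕ } ∼ inf{ sup{ι(x⁽ᵏ⁾) : k ≥ n} : n ∈ ℕ }. -/

import Mathlib

/-- The ambient space `𝓡` of decimal representations: an integer part together
with a sequence of digits in `{0,…,9}`. -/
abbrev DecimalRep := ℤ × (ℕ → Fin 10)

namespace DecimalRep

open scoped Classical

/-- The truncation `[x]_k = x₀ + ∑_{i=1}^k x_i / 10^i` of `x` up to the `k`-th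
digit, as a rational number. -/
def trunc (x : DecimalRep) (k : ℕ) : ℚ :=
  (x.1 : ℚ) + ∑ i ∈ Finset.range k, ((x.2 i : ℕ) : ℚ) / 10 ^ (i + 1)

/-- The order `⪯` on `𝓡`: `x ⪯ y` iff every truncation of `x` is at most the
corresponding truncation of `y`. -/
def le (x y : DecimalRep) : Prop := ∀ k : ℕ, trunc x k ≤ trunc y k

/-- The strict order `≺` on `𝓡`. -/
def lt (x y : DecimalRep) : Prop := le x y ∧ x ≠ y

/-- Two decimal representations are equivalent ("have no gap") iff there is no
third element lying between them. -/
def equiv (x y : DecimalRep) : Prop :=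
  ¬ ∃ z : DecimalRep, z ≠ x ∧ z ≠ y ∧
      ((le x z ∧ le z y) ∨ (le y z ∧ le z x))

/-- `𝓡₉`: decimal representations ending in an infinite string of nines. -/
def allNines (x : DecimalRep) : Prop := ∃ N : ℕ, ∀ k ≥ N, x.2 k = 9

/-- `ℚ_F`: decimal representations ending in an infinite string of zeros. -/
def finiteDec (x : DecimalRep) : Prop := ∃ N : ℕ, ∀ k ≥ N, x.2 k = 0

/-- The decimal expansion map `ι : ℚ → 𝓡`, satisfying
`[ι(α)]_k = ⌊10^k·α⌋/10^k` for all `k`. -/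
def iota (α : ℚ) : DecimalRep :=
  (⌊α⌋, fun k => ⟨(⌊α * 10 ^ (k + 1)⌋ % 10).toNat, by
    have h1 : (0 : ℤ) ≤ ⌊α * 10 ^ (k + 1)⌋ % 10 := Int.emod_nonneg _ (by norm_num)
    have h2 : ⌊α * 10 ^ (k + 1)⌋ % 10 < 10 := Int.emod_lt_of_pos _ (by norm_num)
    omega⟩)

/-- `M` is a least upper bound of `W` in `(𝓡,⪯)`. -/
def IsLub (W : Set DecimalRep) (M : DecimalRep) : Prop :=
  (∀ w ∈ W, le w M) ∧ ∀ M' : DecimalRep, (∀ w ∈ W, le w M') → le M M'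

/-- `M` is a greatest lower bound of `W` in `(𝓡,⪯)`. -/
def IsGlb (W : Set DecimalRep) (M : DecimalRep) : Prop :=
  (∀ w ∈ W, le M w) ∧ ∀ M' : DecimalRep, (∀ w ∈ W, le M' w) → le M' M

/-- The least upper bound of a set in `(𝓡,⪯)` (junk value if none exists). -/
noncomputable def sup (W : Set DecimalRep) : DecimalRep :=
  if h : ∃ M, IsLub W M then h.choose else default

/-- The greatest lower bound of a set in `(𝓡,⪯)` (junk value if none exists). -/
noncomputable def inf (W : Set DecimalRep) : DecimalRep :=
  if h : ∃ M, IsGlb W M then h.choose else default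

/-- Addition `x ⊕ y := sup {ι([x]_k + [y]_k) : k ∈ ℕ}` on `𝓡`. -/
noncomputable def add (x y : DecimalRep) : DecimalRep :=
  sup { z | ∃ k : ℕ, z = iota (trunc x k + trunc y k) }

/-- The "additive inverse" map `Ψ(x₀.x₁x₂⋯) = (−1−x₀).(9−x₁)(9−x₂)⋯`. -/
def psi (x : DecimalRep) : DecimalRep :=
  (-1 - x.1, fun k => ⟨9 - (x.2 k).val, by have := (x.2 k).isLt; omega⟩)

/-- The signal map: `0` on the nonnegative part, `1` on the negative part. -/
noncomputable def sign (x : DecimalRep) : ℕ :=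
  if le (iota 0) x then 0 else 1

/-- The absolute value `‖x‖ := max {x, Ψ(x)}` with respect to `⪯`. -/
noncomputable def norm (x : DecimalRep) : DecimalRep :=
  if le x (psi x) then psi x else x

/-- Multiplication
`x ⊗ y := Ψ^(sign x + sign y) (sup {ι([‖x‖]_k · [‖y‖]_k) : k ∈ ℕ})` on `𝓡`. -/
noncomputable def mul (x y : DecimalRep) : DecimalRep :=
  psi^[sign x + sign y]
    (sup { z | ∃ k : ℕ, z = iota (trunc (norm x) k * trunc (norm y) k) })

/-- The multiplicative inverse
`x⁻¹ := Ψ^(sign x) (inf {ι(1/[‖x‖]_k) : k ∈ ℕ, [‖x‖]_k > 0})`. -/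
noncomputable def inv (x : DecimalRep) : DecimalRep :=
  psi^[sign x]
    (inf { z | ∃ k : ℕ, 0 < trunc (norm x) k ∧ z = iota (1 / trunc (norm x) k) })

/-- A sequence of rationals is Cauchy. -/
def IsCauchy (x : ℕ → ℚ) : Prop :=
  ∀ ε : ℚ, 0 < ε → ∃ N : ℕ, ∀ m n : ℕ, N ≤ m → N ≤ n → |x m - x n| < ε

/-- The upper limit `inf { sup {f k : k ≥ n} : n ∈ ℕ }` of a sequence in `𝓡`. -/
noncomputable def upperLimit (f : ℕ → DecimalRep) : DecimalRep :=
  inf { z | ∃ n : ℕ, z = sup { w | ∃ k : ℕ, n ≤ k ∧ w = f k } }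

/-- The lower limit `sup { inf {f k : k ≥ n} : n ∈ ℕ }` of a sequence in `𝓡`. -/
noncomputable def lowerLimit (f : ℕ → DecimalRep) : DecimalRep :=
  sup { z | ∃ n : ℕ, z = inf { w | ∃ k : ℕ, n ≤ k ∧ w = f k } }

end DecimalRep

namespace DecimalRep

/-- Scaled truncation. -/
def T (x : DecimalRep) : ℕ → ℤ
  | 0 => x.1
  | k + 1 => 10 * T x k + ((x.2 k : ℕ) : ℤ)

lemma trunc_T (x : DecimalRep) (k : ℕ) : trunc x k = (T x k : ℚ) / 10 ^ k := by
  induction k with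
  | zero => simp [trunc, T]
  | succ k ih =>
    have h : trunc x (k + 1) = trunc x k + ((x.2 k : ℕ) : ℚ) / 10 ^ (k + 1) := by
      simp only [trunc, Finset.sum_range_succ]; ring
    rw [h, ih]
    simp only [T]
    push_cast
    field_simp
    ring

lemma le_iff_T (x y : DecimalRep) : le x y ↔ ∀ k, T x k ≤ T y k := by
  unfold le
  refine forall_congr' fun k => ?_
  rw [trunc_T, trunc_T, div_le_div_iff_of_pos_right (by positivity)]
  exact_mod_cast Iff.rfl

lemma T_div (x : DecimalRep) (k : ℕ) : T x (k + 1) / 10 = T x k := by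
  have := (x.2 k).isLt
  simp only [T]
  omega

lemma T_inj {x y : DecimalRep} (h : ∀ k, T x k = T y k) : x = y := by
  refine Prod.ext (h 0) (funext fun k => Fin.ext ?_)
  have h1 := h k
  have h2 := h (k + 1)
  simp only [T] at h2
  omega

lemma exists_of_seq (a : ℕ → ℤ) (h : ∀ k, a (k + 1) / 10 = a k) :
    ∃ x : DecimalRep, ∀ k, T x k = a k := by
  refine ⟨(a 0, fun k => ⟨(a (k + 1) % 10).toNat, by omega⟩), fun k => ?_⟩
  induction k with
  | zero => rfl
  | succ k ih =>
    simp only [T]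
    rw [ih]
    have := h k
    omega

lemma T_down {x y : DecimalRep} {k : ℕ} (h : T x k = T y k) : ∀ j ≤ k, T x j = T y j := by
  induction k with
  | zero => intro j hj; obtain rfl : j = 0 := by omega
            exact h
  | succ k ih =>
    intro j hj
    rcases Nat.lt_or_ge k j with h1 | h1
    · obtain rfl : j = k + 1 := by omega
      exact h
    · exact ih (by rw [← T_div x, ← T_div y, h]) j h1

lemma T_iota (α : ℚ) (k : ℕ) : T (iota α) k = ⌊α * 10 ^ k⌋ := by
  induction k with
  | zero => simp [T, iota]
  | succ k ih =>
    have hd : ⌊α * 10 ^ (k + 1)⌋ / 10 = ⌊α * 10 ^ k⌋ := by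
      symm
      rw [Int.floor_eq_iff]
      have h1 := Int.floor_le (α * 10 ^ (k + 1))
      have h2 := Int.lt_floor_add_one (α * 10 ^ (k + 1))
      generalize ⌊α * 10 ^ (k + 1)⌋ = n at *
      have h3 : 10 * (n / 10) ≤ n := by omega
      have h4 : n + 1 ≤ 10 * (n / 10) + 10 := by omega
      have h3' : (10 : ℚ) * ((n / 10 : ℤ) : ℚ) ≤ n := by exact_mod_cast h3
      have h4' : (n : ℚ) + 1 ≤ (10 : ℚ) * ((n / 10 : ℤ) : ℚ) + 10 := by exact_mod_cast h4
      rw [pow_succ] at h1 h2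
      constructor <;> linarith
    simp only [T]
    rw [ih]
    simp only [iota]
    omega

lemma sup_spec (W : Set DecimalRep) (hne : W.Nonempty)
    (hb : ∀ k, ∃ B, ∀ w ∈ W, T w k ≤ B) :
    (∀ w ∈ W, ∀ k, T w k ≤ T (sup W) k) ∧ ∀ k, ∃ w ∈ W, T w k = T (sup W) k := by
  have hmax : ∀ k, ∃ w ∈ W, ∀ v ∈ W, T v k ≤ T w k := by
    intro k
    obtain ⟨B, hB⟩ := hb k
    obtain ⟨w0, hw0⟩ := hne
    obtain ⟨m, ⟨w, hw, rfl⟩, hm⟩ := Int.exists_greatest_of_bdd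
      (P := fun z => ∃ w ∈ W, T w k = z) ⟨B, by rintro z ⟨w, hw, rfl⟩; exact hB w hw⟩
      ⟨_, w0, hw0, rfl⟩
    exact ⟨w, hw, fun v hv => hm _ ⟨v, hv, rfl⟩⟩
  choose w hw hmx using hmax
  obtain ⟨M, hM⟩ := exists_of_seq (fun k => T (w k) k) (by
    intro k
    apply le_antisymm
    · rw [T_div]; exact hmx k _ (hw _)
    · rw [← T_div (w k)]
      have := hmx (k + 1) _ (hw k)
      omega)
  have hlub : IsLub W M := by
    refine ⟨fun v hv => ?_, fun M' hM' => ?_⟩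
    · rw [le_iff_T]; intro k; rw [hM]; exact hmx k v hv
    · rw [le_iff_T]; intro k; rw [hM]; exact (le_iff_T _ _).1 (hM' _ (hw k)) k
  have hex : ∃ M, IsLub W M := ⟨M, hlub⟩
  have hs : IsLub W (sup W) := by
    unfold sup; rw [dif_pos hex]; exact hex.choose_spec
  have he : ∀ k, T (sup W) k = T (w k) k := by
    intro k
    rw [← hM]
    exact le_antisymm ((le_iff_T _ _).1 (hs.2 _ hlub.1) k) ((le_iff_T _ _).1 (hlub.2 _ hs.1) k)
  exact ⟨fun v hv => (le_iff_T _ _).1 (hs.1 v hv), fun k => ⟨w k, hw k, (he k).symm⟩⟩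

lemma inf_spec (W : Set DecimalRep) (hne : W.Nonempty)
    (hb : ∀ k, ∃ B, ∀ w ∈ W, B ≤ T w k) :
    (∀ w ∈ W, ∀ k, T (inf W) k ≤ T w k) ∧ ∀ k, ∃ w ∈ W, T w k = T (inf W) k := by
  have hmax : ∀ k, ∃ w ∈ W, ∀ v ∈ W, T w k ≤ T v k := by
    intro k
    obtain ⟨B, hB⟩ := hb k
    obtain ⟨w0, hw0⟩ := hne
    obtain ⟨m, ⟨w, hw, rfl⟩, hm⟩ := Int.exists_least_of_bdd
      (P := fun z => ∃ w ∈ W, T w k = z) ⟨B, by rintro z ⟨w, hw, rfl⟩; exact hB w hw⟩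
      ⟨_, w0, hw0, rfl⟩
    exact ⟨w, hw, fun v hv => hm _ ⟨v, hv, rfl⟩⟩
  choose w hw hmx using hmax
  obtain ⟨M, hM⟩ := exists_of_seq (fun k => T (w k) k) (by
    intro k
    apply le_antisymm
    · rw [← T_div (w k)]
      have := hmx (k + 1) _ (hw k)
      omega
    · rw [T_div]; exact hmx k _ (hw _))
  have hlub : IsGlb W M := by
    refine ⟨fun v hv => ?_, fun M' hM' => ?_⟩
    · rw [le_iff_T]; intro k; rw [hM]; exact hmx k v hv
    · rw [le_iff_T]; intro k; rw [hM]; exact (le_iff_T _ _).1 (hM' _ (hw k)) k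
  have hex : ∃ M, IsGlb W M := ⟨M, hlub⟩
  have hs : IsGlb W (inf W) := by
    unfold inf; rw [dif_pos hex]; exact hex.choose_spec
  have he : ∀ k, T (inf W) k = T (w k) k := by
    intro k
    rw [← hM]
    exact le_antisymm ((le_iff_T _ _).1 (hlub.2 _ hs.1) k) ((le_iff_T _ _).1 (hs.2 _ hlub.1) k)
  exact ⟨fun v hv => (le_iff_T _ _).1 (hs.1 v hv), fun k => ⟨w k, hw k, (he k).symm⟩⟩

lemma equiv_of_close {L U : DecimalRep} (h1 : ∀ k, T L k ≤ T U k)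
    (h2 : ∀ k, T U k ≤ T L k + 1) : equiv L U := by
  rintro ⟨z, hzL, hzU, ⟨ha, hb⟩ | ⟨ha, hb⟩⟩
  · rw [le_iff_T] at ha hb
    have hk : ∃ k, T z k ≠ T L k := by
      by_contra! h; exact hzL (T_inj h)
    have hj : ∃ k, T z k ≠ T U k := by
      by_contra! h; exact hzU (T_inj h)
    obtain ⟨k, hk⟩ := hk
    obtain ⟨j, hj⟩ := hj
    have := ha k; have := hb k; have := ha j; have := hb j
    have := h2 k; have := h2 j
    rcases le_total k j with h | h
    · exact hk (T_down (k := j) (by omega) k h)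
    · exact hj (T_down (k := k) (by omega) j h)
  · rw [le_iff_T] at ha hb
    refine hzL (T_inj fun k => ?_)
    have := ha k; have := hb k; have := h1 k
    omega

lemma limits_equiv (f : ℕ → DecimalRep) (lo hi : ℕ → ℤ)
    (hlo : ∀ n k, lo k ≤ T (f n) k) (hhi : ∀ n k, T (f n) k ≤ hi k)
    (hc : ∀ k, ∃ N, ∀ m n, N ≤ m → N ≤ n → T (f m) k ≤ T (f n) k + 1) :
    equiv (lowerLimit f) (upperLimit f) := by
  have hs := fun n => sup_spec { w | ∃ k : ℕ, n ≤ k ∧ w = f k } ⟨f n, n, le_rfl, rfl⟩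
    (fun k => ⟨hi k, by rintro w ⟨m, -, rfl⟩; exact hhi m k⟩)
  have hi' := fun n => inf_spec { w | ∃ k : ℕ, n ≤ k ∧ w = f k } ⟨f n, n, le_rfl, rfl⟩
    (fun k => ⟨lo k, by rintro w ⟨m, -, rfl⟩; exact hlo m k⟩)
  have hU := inf_spec { z | ∃ n : ℕ, z = sup { w | ∃ k : ℕ, n ≤ k ∧ w = f k } }
    ⟨_, 0, rfl⟩ (fun k => ⟨lo k, by
      rintro w ⟨n, rfl⟩
      exact (hlo n k).trans ((hs n).1 (f n) ⟨n, le_rfl, rfl⟩ k)⟩)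
  have hL := sup_spec { z | ∃ n : ℕ, z = inf { w | ∃ k : ℕ, n ≤ k ∧ w = f k } }
    ⟨_, 0, rfl⟩ (fun k => ⟨hi k, by
      rintro w ⟨n, rfl⟩
      exact ((hi' n).1 (f n) ⟨n, le_rfl, rfl⟩ k).trans (hhi n k)⟩)
  apply equiv_of_close
  · intro k
    obtain ⟨_, ⟨n, rfl⟩, hn⟩ := hL.2 k
    obtain ⟨_, ⟨m, rfl⟩, hm⟩ := hU.2 k
    unfold lowerLimit upperLimit
    rw [← hn, ← hm]
    exact ((hi' n).1 (f (max n m)) ⟨_, le_max_left _ _, rfl⟩ k).trans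
      ((hs m).1 (f (max n m)) ⟨_, le_max_right _ _, rfl⟩ k)
  · intro k
    obtain ⟨N, hN⟩ := hc k
    have a1 := hU.1 _ ⟨N, rfl⟩ k
    have a2 := hL.1 _ ⟨N, rfl⟩ k
    obtain ⟨_, ⟨m, hm, rfl⟩, b1⟩ := (hs N).2 k
    obtain ⟨_, ⟨n, hn, rfl⟩, b2⟩ := (hi' N).2 k
    have := hN m n hm hn
    unfold lowerLimit upperLimit
    linarith

end DecimalRep

open DecimalRep in
/-- For every Cauchy sequence of rationals, the lower limit of the sequence of
its decimal expansions is equivalent to the upper limit. -/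
theorem lowerLimit_equiv_upperLimit_of_cauchy (x : ℕ → ℚ) (hx : IsCauchy x) :
    equiv (lowerLimit fun n => iota (x n)) (upperLimit fun n => iota (x n)) := by
  have hcs : IsCauSeq abs x := by
    intro ε hε
    obtain ⟨N, hN⟩ := hx ε hε
    exact ⟨N, fun j hj => hN j N hj le_rfl⟩
  obtain ⟨B, hB⟩ := hcs.bounded
  have hB' : ∀ n, -B ≤ x n ∧ x n ≤ B := fun n => abs_le.1 (hB n).le
  refine limits_equiv _ (fun k => ⌊-B * 10 ^ k⌋) (fun k => ⌊B * 10 ^ k⌋) ?_ ?_ ?_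
  · intro n k
    rw [T_iota]
    exact Int.floor_le_floor (mul_le_mul_of_nonneg_right (hB' n).1 (by positivity))
  · intro n k
    rw [T_iota]
    exact Int.floor_le_floor (mul_le_mul_of_nonneg_right (hB' n).2 (by positivity))
  · intro k
    have hp : (0 : ℚ) < 10 ^ k := by positivity
    obtain ⟨N, hN⟩ := hx (1 / 10 ^ k) (by positivity)
    refine ⟨N, fun m n hm hn => ?_⟩
    rw [T_iota, T_iota, ← Int.floor_add_one]
    apply Int.floor_le_floor
    have h := (abs_lt.1 (hN m n hm hn)).2
    rw [lt_div_iff₀ hp] at h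
    linarith
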